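/- Let c > 0, let k⁰ : [0,∞) × [0,∞) → ℝ be continuous, and let K(a,b) = ∫₀^a ∫₀^b k⁰(s,s') ds' ds. Then for all x, x' ∈ ℝ³ with x ≠ 0 and x' ≠ 0, writing r = |x| and r' = |x'|, and for all t, t' ∈ ℝ: (t t' / (16π²)) ∫_{S²} ∫_{S²} k⁰( |x − c|t|γ|², |x' − c|t'|γ'|² ) dσ_{S²}(γ) dσ_{S²}(γ') = (sgn(t t') / (16 c² r r')) · Σ_{ε,ε' ∈ {−1,1}} ε ε' K( (r + ε c|t|)², (r' + ε' c|t'|)² ). -/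

import Mathlib

open MeasureTheory Real

/-- The surface measure on the unit sphere `S² ⊂ ℝ³` (total mass `4π`). -/
noncomputable def sphMeas : Measure (Metric.sphere (0 : EuclideanSpace ℝ (Fin 3)) 1) :=
  (volume : Measure (EuclideanSpace ℝ (Fin 3))).toSphere

/-!
For a unit vector `e` of a three-dimensional Euclidean space, the integral of `f ⟪e, y⟫` over the
ball of radius `R` can be computed by spherical shells or by plane slices orthogonal to `e`, which
are discs of area `π (R² - z²)`. Differentiating in `R` at `R = 1` gives Archimedes' hat-box
theorem: `⟪e, γ⟫` is uniformly distributed on `[-1, 1]` when `γ` is uniform on the unit sphere.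
By the law of cosines `‖x - ρ γ‖²` is then an affine function of a uniform variable, so it is
uniform on `[(‖x‖ - ρ)², (‖x‖ + ρ)²]`. The double spherical mean of the kernel is therefore a
multiple of its integral over a rectangle, that is, of an alternating sum of values of `K` at the
four corners.
-/

open Set Metric Module

variable {F : Type*} [NormedAddCommGroup F] [NormedSpace ℝ F]

section PolarCoordinates

variable {V : Type*} [NormedAddCommGroup V] [NormedSpace ℝ V] [FiniteDimensional ℝ V]
  [Nontrivial V] [MeasurableSpace V] [BorelSpace V] (μ : Measure V) [μ.IsAddHaarMeasure]

theorem integral_volumeIoiPow (n : ℕ) (f : ℝ → F) :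
    ∫ r : Ioi (0 : ℝ), f r ∂Measure.volumeIoiPow n = ∫ r in Ioi (0 : ℝ), r ^ n • f r := by
  simp only [Measure.volumeIoiPow, ENNReal.ofReal]
  rw [integral_withDensity_eq_integral_smul
      (measurable_subtype_coe.pow_const n).real_toNNReal,
    integral_subtype_comap measurableSet_Ioi fun r : ℝ ↦ (r ^ n).toNNReal • f r]
  refine setIntegral_congr_fun measurableSet_Ioi fun r (hr : 0 < r) ↦ ?_
  rw [NNReal.smul_def, coe_toNNReal _ (by positivity)]

theorem integral_eq_integral_Ioi_integral_toSphere {f : V → F} (hf : Integrable f μ) :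
    ∫ y, f y ∂μ = ∫ r in Ioi (0 : ℝ), r ^ (finrank ℝ V - 1) •
      ∫ γ : sphere (0 : V) 1, f (r • (γ : V)) ∂μ.toSphere := by
  have polar := μ.measurePreserving_homeomorphUnitSphereProd.symm
    (homeomorphUnitSphereProd V).toMeasurableEquiv
  have hf_punctured : Integrable (fun y : ({0}ᶜ : Set V) ↦ f y) (μ.comap (↑)) :=
    (integrableOn_iff_comap_subtypeVal (measurableSet_singleton (0 : V)).compl).mp hf.integrableOn
  calc ∫ y, f y ∂μ = ∫ y : ({0}ᶜ : Set V), f y ∂μ.comap (↑) := by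
        rw [integral_subtype_comap (measurableSet_singleton _).compl f, restrict_compl_singleton]
    _ = ∫ p : sphere (0 : V) 1 × Ioi (0 : ℝ), f ((p.2 : ℝ) • (p.1 : V))
          ∂μ.toSphere.prod (.volumeIoiPow (finrank ℝ V - 1)) := by
        simpa using (polar.integral_comp' fun y : ({0}ᶜ : Set V) ↦ f y).symm
    _ = ∫ r : Ioi (0 : ℝ), ∫ γ : sphere (0 : V) 1, f ((r : ℝ) • (γ : V)) ∂μ.toSphere
          ∂.volumeIoiPow (finrank ℝ V - 1) :=
        integral_prod_symm _ <| by
          simpa [Function.comp_def] using polar.integrable_comp_of_integrable hf_punctured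
    _ = _ := integral_volumeIoiPow _ fun r ↦ ∫ γ : sphere (0 : V) 1, f (r • (γ : V)) ∂μ.toSphere

theorem setIntegral_ball_eq_integral_toSphere {f : V → F} {R : ℝ} (hR : 0 ≤ R)
    (hf : IntegrableOn f (ball 0 R) μ) :
    ∫ y in ball 0 R, f y ∂μ = ∫ r in (0 : ℝ)..R, r ^ (finrank ℝ V - 1) •
      ∫ γ : sphere (0 : V) 1, f (r • (γ : V)) ∂μ.toSphere := by
  rw [← integral_indicator measurableSet_ball, integral_eq_integral_Ioi_integral_toSphere μ
    ((integrable_indicator_iff measurableSet_ball).mpr hf), intervalIntegral.integral_of_le hR,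
    integral_Ioc_eq_integral_Ioo, ← Ioi_inter_Iio, ← setIntegral_indicator measurableSet_Iio]
  refine setIntegral_congr_fun measurableSet_Ioi fun r (hr : 0 < r) ↦ ?_
  by_cases hrR : r < R <;> simp [indicator, norm_smul, abs_of_pos hr, hrR]

theorem hasDerivAt_setIntegral_ball [CompleteSpace F] {f : V → F} (hf : Continuous f) {R : ℝ}
    (hR : 0 < R) :
    HasDerivAt (fun R ↦ ∫ y in ball 0 R, f y ∂μ)
      (R ^ (finrank ℝ V - 1) • ∫ γ : sphere (0 : V) 1, f (R • (γ : V)) ∂μ.toSphere) R := by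
  have sphere_integral_continuous :
      Continuous fun r : ℝ ↦ ∫ γ : sphere (0 : V) 1, f (r • (γ : V)) ∂μ.toSphere := by
    simpa only [setIntegral_univ] using continuous_parametric_integral_of_continuous
      (μ := μ.toSphere) (f := fun (r : ℝ) (γ : sphere (0 : V) 1) ↦ f (r • (γ : V)))
      (by unfold Function.uncurry; fun_prop) isCompact_univ
  refine (((continuous_pow _).smul sphere_integral_continuous).integral_hasStrictDerivAt
    0 R).hasDerivAt.congr_of_eventuallyEq ?_
  filter_upwards [lt_mem_nhds hR] with S hS
  exact setIntegral_ball_eq_integral_toSphere μ hS.le <|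
    (hf.continuousOn.integrableOn_compact (isCompact_closedBall 0 S)).mono_set
      ball_subset_closedBall

end PolarCoordinates

section Geometry

variable {E : Type*} [NormedAddCommGroup E] [InnerProductSpace ℝ E]

theorem smul_add_orthogonal_mem_ball_iff {e : E} (he : ‖e‖ = 1) {R : ℝ} (hR : 0 ≤ R) (z : ℝ)
    (w : (ℝ ∙ e)ᗮ) :
    z • e + (w : E) ∈ ball 0 R ↔ w ∈ ball 0 √(R ^ 2 - z ^ 2) := by
  have pythagoras : ‖z • e + (w : E)‖ ^ 2 = z ^ 2 + ‖w‖ ^ 2 := by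
    have orthogonal : inner ℝ (z • e) (w : E) = 0 := by
      rw [inner_smul_left, Submodule.mem_orthogonal_singleton_iff_inner_right.mp w.2, mul_zero]
    simp [norm_add_sq_real, orthogonal, norm_smul, he]
  rw [mem_ball_zero_iff, mem_ball_zero_iff, lt_sqrt (norm_nonneg _),
    ← sq_lt_sq₀ (norm_nonneg _) hR, pythagoras, lt_sub_iff_add_lt']

theorem norm_sub_smul_sq_eq_sub_mul_inner {x : E} (hx : x ≠ 0) (ρ : ℝ) {γ : E} (hγ : ‖γ‖ = 1) :
    ‖x - ρ • γ‖ ^ 2 = ‖x‖ ^ 2 + ρ ^ 2 - 2 * ‖x‖ * ρ * inner ℝ (‖x‖⁻¹ • x) γ := by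
  have : ‖x‖ ≠ 0 := norm_ne_zero_iff.mpr hx
  rw [norm_sub_sq_real, inner_smul_right, real_inner_smul_left, norm_smul, hγ, mul_one,
    norm_eq_abs, sq_abs]
  field_simp
  ring

end Geometry

variable {E : Type*} [NormedAddCommGroup E] [InnerProductSpace ℝ E] [FiniteDimensional ℝ E]
  [MeasurableSpace E] [BorelSpace E]

section Slicing

theorem measurePreserving_smul_add_orthogonal {e : E} (he : ‖e‖ = 1) :
    MeasurePreserving (fun p : ℝ × (ℝ ∙ e)ᗮ ↦ p.1 • e + (p.2 : E)) := by
  have axis := (LinearIsometryEquiv.toSpanUnitSingleton (𝕜 := ℝ) e he).measurePreserving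
  have toLp := (WithLp.volume_preserving_symm_measurableEquiv_toLp_prod (ℝ ∙ e) (ℝ ∙ e)ᗮ).symm
  exact (ℝ ∙ e).orthogonalDecomposition.symm.measurePreserving.comp <|
    toLp.comp <| axis.prod (.id volume)

theorem integral_eq_integral_integral_orthogonal {e : E} (he : ‖e‖ = 1) {g : E → F}
    (hg : Integrable g) :
    ∫ y, g y = ∫ z : ℝ, ∫ w : (ℝ ∙ e)ᗮ, g (z • e + (w : E)) := by
  have slicing := measurePreserving_smul_add_orthogonal he
  have hg_map := hg
  rw [← slicing.map_eq] at hg_map ⊢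
  rw [integral_map slicing.aemeasurable hg_map.aestronglyMeasurable]
  exact integral_prod _ (slicing.integrable_comp_of_integrable hg)

variable [CompleteSpace F]

theorem setIntegral_ball_comp_inner {e : E} (he : ‖e‖ = 1) {f : ℝ → F} (hf : Continuous f)
    {R : ℝ} (hR : 0 ≤ R) :
    ∫ y in ball (0 : E) R, f (inner ℝ e y) =
      ∫ z : ℝ, volume.real (ball (0 : (ℝ ∙ e)ᗮ) √(R ^ 2 - z ^ 2)) • f z := by
  have hf_ball : IntegrableOn (fun y ↦ f (inner ℝ e y)) (ball (0 : E) R) :=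
    ((hf.comp (by fun_prop)).continuousOn.integrableOn_compact
      (isCompact_closedBall 0 R)).mono_set ball_subset_closedBall
  rw [← integral_indicator measurableSet_ball, integral_eq_integral_integral_orthogonal he
    ((integrable_indicator_iff measurableSet_ball).mpr hf_ball)]
  congr with z
  have height (w : (ℝ ∙ e)ᗮ) : inner ℝ e (z • e + (w : E)) = z := by
    rw [inner_add_right, inner_smul_right,
      Submodule.mem_orthogonal_singleton_iff_inner_right.mp w.2]
    simp [he]
  rw [← setIntegral_const, ← integral_indicator measurableSet_ball]
  congr with w
  classical simp only [indicator_apply, smul_add_orthogonal_mem_ball_iff he hR, height]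

theorem setIntegral_ball_comp_inner_of_finrank_eq_three (hE : finrank ℝ E = 3) {e : E}
    (he : ‖e‖ = 1) {f : ℝ → F} (hf : Continuous f) {R : ℝ} (hR : 0 ≤ R) :
    ∫ y in ball (0 : E) R, f (inner ℝ e y) = π • ∫ z in (-R)..R, (R ^ 2 - z ^ 2) • f z := by
  have : Fact (finrank ℝ E = 2 + 1) := ⟨hE⟩
  have finrank_plane : finrank ℝ (ℝ ∙ e)ᗮ = 2 :=
    Submodule.finrank_orthogonal_span_singleton (norm_ne_zero_iff.mp (by simp [he]))
  have : Nontrivial (ℝ ∙ e)ᗮ := nontrivial_of_finrank_pos (R := ℝ) (by lia)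
  have disc_area (r : ℝ) (hr : 0 ≤ r) : volume.real (ball (0 : (ℝ ∙ e)ᗮ) r) = π * r ^ 2 := by
    rw [measureReal_def, InnerProductSpace.volume_ball_of_dim_even (k := 1) (by lia), finrank_plane]
    simp [ENNReal.toReal_ofReal, hr, pi_nonneg, mul_comm]
  rw [setIntegral_ball_comp_inner he hf hR, intervalIntegral.integral_of_le (by linarith),
    ← integral_indicator measurableSet_Ioc, ← integral_smul]
  congr with z
  rw [disc_area _ (sqrt_nonneg _)]
  by_cases hz : z ∈ Ioc (-R) R
  · have : 0 ≤ R ^ 2 - z ^ 2 := by nlinarith [hz.1, hz.2]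
    rw [indicator_of_mem hz, sq_sqrt this, mul_smul]
  · have : R ^ 2 - z ^ 2 ≤ 0 := by
      rw [mem_Ioc, not_and_or, not_lt, not_le] at hz
      rcases hz with hz | hz <;> nlinarith
    simp [hz, sqrt_eq_zero_of_nonpos this]

end Slicing

section HatBox

variable [CompleteSpace F]

theorem hasDerivAt_integral_neg_self {g : ℝ → F} (hg : Continuous g) (R : ℝ) :
    HasDerivAt (fun R ↦ ∫ z in (-R)..R, g z) (g R + g (-R)) R := by
  have right_end := (hg.integral_hasStrictDerivAt 0 R).hasDerivAt
  have left_end := (hg.integral_hasStrictDerivAt 0 (-R)).hasDerivAt.scomp R (hasDerivAt_neg R)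
  convert right_end.sub left_end using 1
  · ext S
    exact (intervalIntegral.integral_interval_sub_left (hg.intervalIntegrable _ _)
      (hg.intervalIntegrable _ _)).symm
  · simp

theorem hasDerivAt_integral_neg_self_sq_sub_sq_smul {f : ℝ → F} (hf : Continuous f) (R : ℝ) :
    HasDerivAt (fun R ↦ ∫ z in (-R)..R, (R ^ 2 - z ^ 2) • f z)
      ((2 * R) • ∫ z in (-R)..R, f z) R := by
  have separate : (fun R : ℝ ↦ ∫ z in (-R)..R, (R ^ 2 - z ^ 2) • f z) =
      fun R ↦ R ^ 2 • (∫ z in (-R)..R, f z) - ∫ z in (-R)..R, z ^ 2 • f z := by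
    ext R
    simp only [sub_smul]
    rw [intervalIntegral.integral_sub, intervalIntegral.integral_smul] <;>
      exact Continuous.intervalIntegrable (by fun_prop) _ _
  rw [separate]
  refine (((hasDerivAt_pow 2 R).fun_smul (hasDerivAt_integral_neg_self hf R)).fun_sub
    (hasDerivAt_integral_neg_self (g := fun z ↦ z ^ 2 • f z) (by fun_prop) R)).congr_deriv ?_
  norm_num

/-- Archimedes' hat-box theorem. -/
theorem integral_toSphere_comp_inner (hE : finrank ℝ E = 3) {e : E} (he : ‖e‖ = 1) {f : ℝ → F}
    (hf : Continuous f) :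
    ∫ γ : sphere (0 : E) 1, f (inner ℝ e (γ : E)) ∂volume.toSphere =
      (2 * π) • ∫ u in (-1 : ℝ)..1, f u := by
  have : Nontrivial E := nontrivial_of_finrank_pos (R := ℝ) (by lia)
  have by_shells := hasDerivAt_setIntegral_ball (volume : Measure E)
    (f := fun y ↦ f (inner ℝ e y)) (by fun_prop) one_pos
  have by_slices := ((hasDerivAt_integral_neg_self_sq_sub_sq_smul hf 1).const_smul
    π).congr_of_eventuallyEq <| (lt_mem_nhds one_pos).mono fun R hR ↦
      setIntegral_ball_comp_inner_of_finrank_eq_three hE he hf (le_of_lt hR)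
  simpa [smul_smul, mul_comm] using by_shells.unique by_slices

theorem integral_toSphere_comp_norm_sub_smul_sq (hE : finrank ℝ E = 3) {x : E} (hx : x ≠ 0)
    {ρ : ℝ} (hρ : 0 < ρ) {h : ℝ → F} (hh : Continuous h) :
    ∫ γ : sphere (0 : E) 1, h (‖x - ρ • (γ : E)‖ ^ 2) ∂volume.toSphere =
      (π / (‖x‖ * ρ)) • ∫ s in (‖x‖ - ρ) ^ 2..(‖x‖ + ρ) ^ 2, h s := by
  have : 0 < ‖x‖ := norm_pos_iff.mpr hx
  calc ∫ γ : sphere (0 : E) 1, h (‖x - ρ • (γ : E)‖ ^ 2) ∂volume.toSphere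
      = ∫ γ : sphere (0 : E) 1,
          h (‖x‖ ^ 2 + ρ ^ 2 - 2 * ‖x‖ * ρ * inner ℝ (‖x‖⁻¹ • x) (γ : E)) ∂volume.toSphere := by
        simp only [norm_sub_smul_sq_eq_sub_mul_inner hx ρ (norm_eq_of_mem_sphere _)]
    _ = (2 * π) • ∫ u in (-1 : ℝ)..1, h (‖x‖ ^ 2 + ρ ^ 2 - 2 * ‖x‖ * ρ * u) :=
        integral_toSphere_comp_inner hE (norm_smul_inv_norm hx)
          (f := fun u ↦ h (‖x‖ ^ 2 + ρ ^ 2 - 2 * ‖x‖ * ρ * u)) (by fun_prop)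
    _ = (π / (‖x‖ * ρ)) • ∫ s in (‖x‖ - ρ) ^ 2..(‖x‖ + ρ) ^ 2, h s := by
        have scale : 2 * π * (2 * ‖x‖ * ρ)⁻¹ = π / (‖x‖ * ρ) := by field_simp
        rw [intervalIntegral.integral_comp_sub_mul _ (by positivity), smul_smul, scale]
        congr 2 <;> ring

end HatBox

section DoubleMean

theorem sub_sq_le_add_sq {a b : ℝ} (ha : 0 ≤ a) (hb : 0 ≤ b) : (a - b) ^ 2 ≤ (a + b) ^ 2 := by
  nlinarith [mul_nonneg ha hb]

theorem map_norm_sub_smul_sq_toSphere (hE : finrank ℝ E = 3) {x : E} (hx : x ≠ 0) {ρ : ℝ}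
    (hρ : 0 < ρ) :
    (volume : Measure E).toSphere.map (fun γ : sphere (0 : E) 1 ↦ ‖x - ρ • (γ : E)‖ ^ 2) =
      (π / (‖x‖ * ρ)).toNNReal • volume.restrict (Ioc ((‖x‖ - ρ) ^ 2) ((‖x‖ + ρ) ^ 2)) := by
  refine ext_of_forall_integral_eq_of_IsFiniteMeasure fun h ↦ ?_
  rw [integral_map (by fun_prop) h.continuous.aestronglyMeasurable,
    integral_toSphere_comp_norm_sub_smul_sq hE hx hρ h.continuous, integral_smul_nnreal_measure,
    intervalIntegral.integral_of_le (sub_sq_le_add_sq (norm_nonneg x) hρ.le), NNReal.smul_def,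
    coe_toNNReal _ (by positivity)]

theorem integral_integral_comp {α β α' β' : Type*} [MeasurableSpace α] [MeasurableSpace β]
    [MeasurableSpace α'] [MeasurableSpace β'] {μ : Measure α} {ν : Measure β} [SFinite μ]
    [SFinite ν] {φ : α → α'} {ψ : β → β'} (hφ : Measurable φ) (hψ : Measurable ψ)
    {k : α' → β' → F} (hk : Integrable k.uncurry ((μ.map φ).prod (ν.map ψ))) :
    ∫ a, ∫ b, k (φ a) (ψ b) ∂ν ∂μ = ∫ s, ∫ s', k s s' ∂ν.map ψ ∂μ.map φ := by
  have hφψ : Measurable (Prod.map φ ψ) := hφ.prodMap hψ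
  rw [integral_integral hk]
  rw [Measure.map_prod_map _ _ hφ hψ] at hk ⊢
  rw [integral_integral (f := fun a b ↦ k (φ a) (ψ b)) (hk.comp_measurable hφψ)]
  exact (integral_map hφψ.aemeasurable hk.aestronglyMeasurable).symm

theorem integral_integral_toSphere_comp_norm_sub_smul_sq {E' : Type*} [NormedAddCommGroup E']
    [InnerProductSpace ℝ E'] [FiniteDimensional ℝ E'] [MeasurableSpace E'] [BorelSpace E']
    (hE : finrank ℝ E = 3) (hE' : finrank ℝ E' = 3) {x : E} (hx : x ≠ 0) {x' : E'} (hx' : x' ≠ 0)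
    {ρ ρ' : ℝ} (hρ : 0 < ρ) (hρ' : 0 < ρ') {k : ℝ → ℝ → F}
    (hk : IntegrableOn k.uncurry
      (Ioc ((‖x‖ - ρ) ^ 2) ((‖x‖ + ρ) ^ 2) ×ˢ Ioc ((‖x'‖ - ρ') ^ 2) ((‖x'‖ + ρ') ^ 2))) :
    ∫ γ : sphere (0 : E) 1, ∫ γ' : sphere (0 : E') 1,
        k (‖x - ρ • (γ : E)‖ ^ 2) (‖x' - ρ' • (γ' : E')‖ ^ 2) ∂volume.toSphere ∂volume.toSphere =
      (π / (‖x‖ * ρ) * (π / (‖x'‖ * ρ'))) • ∫ s in (‖x‖ - ρ) ^ 2..(‖x‖ + ρ) ^ 2,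
        ∫ s' in (‖x'‖ - ρ') ^ 2..(‖x'‖ + ρ') ^ 2, k s s' := by
  rw [integral_integral_comp (k := k) (φ := fun γ : sphere (0 : E) 1 ↦ ‖x - ρ • (γ : E)‖ ^ 2)
    (ψ := fun γ' : sphere (0 : E') 1 ↦ ‖x' - ρ' • (γ' : E')‖ ^ 2) (by fun_prop) (by fun_prop),
    map_norm_sub_smul_sq_toSphere hE hx hρ, map_norm_sub_smul_sq_toSphere hE' hx' hρ']
  · simp only [integral_smul_nnreal_measure, integral_smul, NNReal.smul_def]
    rw [coe_toNNReal _ (by positivity), coe_toNNReal _ (by positivity), smul_smul,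
      mul_comm (π / (‖x'‖ * ρ'))]
    simp only [intervalIntegral.integral_of_le, sub_sq_le_add_sq, norm_nonneg, hρ.le, hρ'.le]
  · rw [map_norm_sub_smul_sq_toSphere hE hx hρ, map_norm_sub_smul_sq_toSphere hE' hx' hρ',
      Measure.prod_smul_left, Measure.prod_smul_right, Measure.prod_restrict]
    exact hk.smul_measure_nnreal.smul_measure_nnreal

theorem intervalIntegrable_integral_of_integrableOn_prod {k : ℝ → ℝ → F} {a b a' b' : ℝ}
    (hab : a ≤ b) (hab' : a' ≤ b') (hk : IntegrableOn k.uncurry (Ioc a b ×ˢ Ioc a' b')) :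
    IntervalIntegrable (fun s ↦ ∫ s' in a'..b', k s s') volume a b := by
  rw [IntegrableOn, Measure.volume_eq_prod, ← Measure.prod_restrict] at hk
  simp only [intervalIntegrable_iff_integrableOn_Ioc_of_le hab,
    intervalIntegral.integral_of_le hab']
  exact hk.integral_prod_left

theorem ae_intervalIntegrable_of_integrableOn_prod {G : Type*} [NormedAddCommGroup G]
    {k : ℝ → ℝ → G} {a b a' b' : ℝ} (hab' : a' ≤ b')
    (hk : IntegrableOn k.uncurry (Ioc a b ×ˢ Ioc a' b')) :
    ∀ᵐ s, s ∈ Ioc a b → IntervalIntegrable (k s) volume a' b' := by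
  rw [IntegrableOn, Measure.volume_eq_prod, ← Measure.prod_restrict] at hk
  simp only [intervalIntegrable_iff_integrableOn_Ioc_of_le hab']
  exact (ae_restrict_iff' measurableSet_Ioc).mp hk.prod_right_ae

theorem integrableOn_Ioc_prod_of_locallyIntegrableOn_Ici_prod {G : Type*} [NormedAddCommGroup G]
    {f : ℝ × ℝ → G} {o o' : ℝ} (hf : LocallyIntegrableOn f (Ici o ×ˢ Ici o')) {a a' : ℝ}
    (ha : o ≤ a) (b : ℝ) (ha' : o' ≤ a') (b' : ℝ) : IntegrableOn f (Ioc a b ×ˢ Ioc a' b') := by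
  have closed_rectangle_subset : Icc a b ×ˢ Icc a' b' ⊆ Ici o ×ˢ Ici o' :=
    prod_mono (fun _ hs ↦ ha.trans hs.1) fun _ hs' ↦ ha'.trans hs'.1
  exact (hf.integrableOn_compact_subset closed_rectangle_subset
    (isCompact_Icc.prod isCompact_Icc)).mono_set
      (prod_mono Ioc_subset_Icc_self Ioc_subset_Icc_self)

theorem integral_integral_eq_sub_of_integrableOn_prod {k : ℝ → ℝ → F} {o a b o' a' b' : ℝ}
    (ha : o ≤ a) (hab : a ≤ b) (ha' : o' ≤ a') (hab' : a' ≤ b')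
    (hk : IntegrableOn k.uncurry (Ioc o b ×ˢ Ioc o' b')) :
    ∫ s in a..b, ∫ s' in a'..b', k s s' =
      (∫ s in o..b, ∫ s' in o'..b', k s s') - (∫ s in o..a, ∫ s' in o'..b', k s s')
        - (∫ s in o..b, ∫ s' in o'..a', k s s') + ∫ s in o..a, ∫ s' in o'..a', k s s' := by
  have inner_split : ∀ᵐ s, s ∈ uIoc a b →
      ∫ s' in a'..b', k s s' = (∫ s' in o'..b', k s s') - ∫ s' in o'..a', k s s' := by
    filter_upwards [ae_intervalIntegrable_of_integrableOn_prod (ha'.trans hab') hk] with s hs hs_mem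
    rw [uIoc_of_le hab] at hs_mem
    have slice := hs (Ioc_subset_Ioc_left ha hs_mem)
    exact (intervalIntegral.integral_interval_sub_left slice
      (slice.mono_set (uIcc_subset_uIcc_left (mem_uIcc_of_le ha' hab')))).symm
  have outer_split {g : ℝ → F} (hg : IntervalIntegrable g volume o b) :
      ∫ s in a..b, g s = (∫ s in o..b, g s) - ∫ s in o..a, g s :=
    (intervalIntegral.integral_interval_sub_left hg
      (hg.mono_set (uIcc_subset_uIcc_left (mem_uIcc_of_le ha hab)))).symm
  have upper := intervalIntegrable_integral_of_integrableOn_prod (ha.trans hab) (ha'.trans hab') hk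
  have lower := intervalIntegrable_integral_of_integrableOn_prod (ha.trans hab) ha'
    (hk.mono_set (prod_mono_right (Ioc_subset_Ioc_right hab')))
  have right_part : uIcc a b ⊆ uIcc o b := uIcc_subset_uIcc_right (mem_uIcc_of_le ha hab)
  rw [intervalIntegral.integral_congr_ae inner_split,
    intervalIntegral.integral_sub (upper.mono_set right_part) (lower.mono_set right_part),
    outer_split upper, outer_split lower]
  abel

end DoubleMean

theorem div_abs_eq_real_sign (r : ℝ) : r / |r| = Real.sign r := by
  rcases lt_trichotomy r 0 with hr | rfl | hr
  · rw [sign_of_neg hr, abs_of_neg hr, div_neg, div_self hr.ne]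
  · simp
  · rw [sign_of_pos hr, abs_of_pos hr, div_self hr.ne']

theorem sum_signs_smul (g : ℝ → ℝ → F) :
    ∑ ε ∈ ({-1, 1} : Finset ℝ), ∑ ε' ∈ ({-1, 1} : Finset ℝ), (ε * ε') • g ε ε' =
      g 1 1 - g (-1) 1 - g 1 (-1) + g (-1) (-1) := by
  have : (-1 : ℝ) ≠ 1 := by norm_num
  simp only [Finset.sum_pair this]
  module

theorem stmt_11_general {E' : Type*} [NormedAddCommGroup E'] [InnerProductSpace ℝ E']
    [FiniteDimensional ℝ E'] [MeasurableSpace E'] [BorelSpace E'] (hE : finrank ℝ E = 3)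
    (hE' : finrank ℝ E' = 3) {c : ℝ} (hc : 0 < c) {k₀ : ℝ → ℝ → F}
    (hk₀ : LocallyIntegrableOn k₀.uncurry (Ici 0 ×ˢ Ici 0))
    {K : ℝ → ℝ → F} (hK : ∀ a b, K a b = ∫ s in (0 : ℝ)..a, ∫ s' in (0 : ℝ)..b, k₀ s s')
    {x : E} (hx : x ≠ 0) {x' : E'} (hx' : x' ≠ 0) (t t' : ℝ) :
    (t * t' / (16 * π ^ 2)) • ∫ γ : sphere (0 : E) 1, ∫ γ' : sphere (0 : E') 1,
        k₀ (‖x - (c * |t|) • (γ : E)‖ ^ 2) (‖x' - (c * |t'|) • (γ' : E')‖ ^ 2)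
          ∂volume.toSphere ∂volume.toSphere =
      (Real.sign (t * t') / (16 * c ^ 2 * ‖x‖ * ‖x'‖)) •
        ∑ ε ∈ ({-1, 1} : Finset ℝ), ∑ ε' ∈ ({-1, 1} : Finset ℝ),
          (ε * ε') • K ((‖x‖ + ε * c * |t|) ^ 2) ((‖x'‖ + ε' * c * |t'|) ^ 2) := by
  rcases eq_or_ne t 0 with rfl | ht
  · simp
  rcases eq_or_ne t' 0 with rfl | ht'
  · simp
  have hρ : 0 < c * |t| := by positivity
  have hρ' : 0 < c * |t'| := by positivity
  have integrable {a a' : ℝ} (ha : 0 ≤ a) (b : ℝ) (ha' : 0 ≤ a') (b' : ℝ) :=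
    integrableOn_Ioc_prod_of_locallyIntegrableOn_Ici_prod hk₀ ha b ha' b'
  rw [integral_integral_toSphere_comp_norm_sub_smul_sq hE hE' hx hx' hρ hρ'
      (integrable (sq_nonneg _) _ (sq_nonneg _) _),
    integral_integral_eq_sub_of_integrableOn_prod (sq_nonneg _)
      (sub_sq_le_add_sq (norm_nonneg x) hρ.le) (sq_nonneg _)
      (sub_sq_le_add_sq (norm_nonneg x') hρ'.le) (integrable le_rfl _ le_rfl _),
    sum_signs_smul fun ε ε' ↦ K ((‖x‖ + ε * c * |t|) ^ 2) ((‖x'‖ + ε' * c * |t'|) ^ 2), smul_smul]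
  simp only [← hK, one_mul, neg_mul, ← sub_eq_add_neg]
  congr 1
  rw [← div_abs_eq_real_sign, abs_mul]
  field_simp

/-- explicit convolution-free formula for the double spherical mean of a radially
symmetric kernel, in terms of the double antiderivative `K`. -/
theorem stmt_11 (c : ℝ) (hc : 0 < c) (k₀ : ℝ → ℝ → ℝ)
    (hk₀ : ContinuousOn (fun s : ℝ × ℝ => k₀ s.1 s.2) (Set.Ici 0 ×ˢ Set.Ici 0))
    (K : ℝ → ℝ → ℝ) (hK : ∀ a b, K a b = ∫ s in (0:ℝ)..a, ∫ s' in (0:ℝ)..b, k₀ s s')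
    (x x' : EuclideanSpace ℝ (Fin 3)) (hx : x ≠ 0) (hx' : x' ≠ 0) (t t' : ℝ) :
    (t * t' / (16 * π ^ 2)) *
        ∫ γ : Metric.sphere (0 : EuclideanSpace ℝ (Fin 3)) 1,
          (∫ γ' : Metric.sphere (0 : EuclideanSpace ℝ (Fin 3)) 1,
            k₀ (‖x - (c * |t|) • (γ : EuclideanSpace ℝ (Fin 3))‖ ^ 2)
               (‖x' - (c * |t'|) • (γ' : EuclideanSpace ℝ (Fin 3))‖ ^ 2) ∂sphMeas) ∂sphMeas
      = (Real.sign (t * t') / (16 * c ^ 2 * ‖x‖ * ‖x'‖)) *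
          ∑ ε ∈ ({-1, 1} : Finset ℝ), ∑ ε' ∈ ({-1, 1} : Finset ℝ),
            ε * ε' * K ((‖x‖ + ε * c * |t|) ^ 2) ((‖x'‖ + ε' * c * |t'|) ^ 2) := by
  simpa only [sphMeas, smul_eq_mul] using stmt_11_general finrank_euclideanSpace_fin
    finrank_euclideanSpace_fin hc
    (hk₀.locallyIntegrableOn (measurableSet_Ici.prod measurableSet_Ici)) hK hx hx' t t'
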